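/- For every n ≥ 1, the set of quaternionic unitary matrices with rational-quaternion entries is dense in the compact symplectic group Sp(n): for every n×n matrix A over the real quaternions ℍ with Aᴴ·A = 1 (Aᴴ the quaternionic conjugate transpose), and every ε > 0, there exists an n×n quaternionic matrix B with Bᴴ·B = 1 such that every entry of B has all four coordinates (real part and the coefficients of i, j, k) rational, and ‖A − B‖ < ε. -/

import Mathlib

open Matrix

/-!
The Cayley transform `s ↦ (1 + s)⁻¹ (1 - s)` is given by a rational formula and exchanges
skew-Hermitian matrices with the unitary matrices `U` for which `1 + U` is invertible.
Skew-Hermitian matrices form a real vector space, in which the rational ones are dense, so every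
such `U` is a limit of rational unitary matrices. An arbitrary unitary `A` is first multiplied by a
diagonal matrix `D` of signs such that `A + D` is invertible; over a division ring of characteristic
not two it exists because, entry by entry down the diagonal, at most one of the two signs makes a
Schur complement vanish.
-/

open scoped Quaternion

section Cayley

variable {R T : Type*} [Ring R] [Ring T]

/-- The Cayley transform `s ↦ (1 + s)⁻¹ (1 - s)`. It takes the junk value `0` when `1 + s` is not
invertible. -/
noncomputable def cayley (s : R) : R := Ring.inverse (1 + s) * (1 - s)

theorem one_add_mul_cayley {s : R} (hs : IsUnit (1 + s)) : (1 + s) * cayley s = 1 - s :=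
  Ring.mul_inverse_cancel_left _ _ hs

theorem cayley_mul_one_add {s : R} (hs : IsUnit (1 + s)) : cayley s * (1 + s) = 1 - s := by
  have hcomm : (1 - s) * (1 + s) = (1 + s) * (1 - s) := by noncomm_ring
  rw [cayley, mul_assoc, hcomm, Ring.inverse_mul_cancel_left _ _ hs]

theorem one_add_cayley_mul_one_add {s : R} (hs : IsUnit (1 + s)) :
    (1 + cayley s) * (1 + s) = 2 := by
  rw [add_mul, one_mul, cayley_mul_one_add hs, add_add_sub_cancel, one_add_one_eq_two]

theorem isUnit_one_add_cayley (h2 : IsUnit (2 : R)) {s : R} (hs : IsUnit (1 + s)) :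
    IsUnit (1 + cayley s) := by
  rwa [← hs.unit.isUnit_mul_units, hs.unit_spec, one_add_cayley_mul_one_add hs]

theorem cayley_cayley (h2 : IsUnit (2 : R)) {s : R} (hs : IsUnit (1 + s)) :
    cayley (cayley s) = s := by
  refine (Ring.inverse_mul_eq_iff_eq_mul _ _ _ (isUnit_one_add_cayley h2 hs)).2 ?_
  calc 1 - cayley s = 2 - (1 + cayley s) := by rw [← one_add_one_eq_two]; abel
    _ = (1 + cayley s) * (1 + s) - (1 + cayley s) := by rw [one_add_cayley_mul_one_add hs]
    _ = (1 + cayley s) * s := by noncomm_ring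

theorem map_cayley (f : T →+* R) {s : T} (hs : IsUnit (1 + s)) : f (cayley s) = cayley (f s) := by
  have hfs : IsUnit (1 + f s) := by simpa using hs.map f
  rw [eq_comm, cayley, Ring.inverse_mul_eq_iff_eq_mul _ _ _ hfs]
  simpa using (congrArg f (one_add_mul_cayley hs)).symm

theorem continuousAt_cayley [TopologicalSpace R] [IsTopologicalRing R] {s : R}
    (hinv : ContinuousAt Ring.inverse (1 + s)) : ContinuousAt cayley s :=
  (ContinuousAt.comp (f := (1 + ·)) hinv (by fun_prop)).mul (by fun_prop)

variable [StarRing R]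

theorem cayley_mem_unitary {s : R} (hs : s ∈ skewAdjoint R) (hu : IsUnit (1 + s)) :
    cayley s ∈ unitary R := by
  have hstar : star (1 + s) = 1 - s := by
    rw [star_add, star_one, skewAdjoint.mem_iff.1 hs, sub_eq_add_neg]
  have hunit : IsUnit (cayley s) := hu.ringInverse.mul (hstar ▸ hu.star)
  refine hunit.mem_unitary_iff_star_mul_self.2 (hu.mul_right_cancel ?_)
  calc star (cayley s) * cayley s * (1 + s) = star (cayley s) * star (1 + s) := by
        rw [mul_assoc, cayley_mul_one_add hu, hstar]
    _ = star (1 - s) := by rw [← star_mul, one_add_mul_cayley hu]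
    _ = 1 * (1 + s) := by rw [← hstar, star_star, one_mul]

theorem cayley_mem_skewAdjoint {a : R} (ha : a ∈ unitary R) (hu : IsUnit (1 + a)) :
    cayley a ∈ skewAdjoint R := by
  refine skewAdjoint.mem_iff.2 (hu.mul_right_cancel ?_)
  calc star (cayley a) * (1 + a) = star (cayley a) * star (1 + a) * a := by
        simp only [mul_assoc, star_add, star_one, add_mul, one_mul,
          Unitary.star_mul_self_of_mem ha, add_comm]
    _ = star (1 - a) * a := by rw [← star_mul, one_add_mul_cayley hu]
    _ = -(1 - a) := by
        rw [star_sub, star_one, sub_mul, Unitary.star_mul_self_of_mem ha, one_mul, neg_sub]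
    _ = -cayley a * (1 + a) := by rw [neg_mul, cayley_mul_one_add hu]

end Cayley

section Density

theorem map_mem_unitary {M N F : Type*} [Monoid M] [StarMul M] [Monoid N] [StarMul N]
    [FunLike F M N] [MonoidHomClass F M N] {f : F} (hstar : ∀ x, f (star x) = star (f x))
    {u : M} (hu : u ∈ unitary M) : f u ∈ unitary N := by
  simp [Unitary.mem_iff, ← hstar, ← map_mul, Unitary.star_mul_self_of_mem hu,
    Unitary.mul_star_self_of_mem hu]

variable {R T : Type*} [Ring R] [StarRing R] [TopologicalSpace R] [IsTopologicalRing R]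
  [ContinuousStar R] [Ring T] [StarRing T] {f : T →+* R}

theorem skewAdjoint_subset_closure_image (hstar : ∀ x, f (star x) = star (f x))
    (hf : DenseRange f) (h2 : IsUnit (2 : R)) :
    (skewAdjoint R : Set R) ⊆ closure (f '' skewAdjoint T) := by
  intro s hs
  obtain ⟨y, rfl⟩ : ∃ y, 2 * y = s := ⟨_, Ring.mul_inverse_cancel_left 2 s h2⟩
  have hy : star y = -y := h2.mul_left_cancel <| by
    simpa [← two_mul, mul_two] using skewAdjoint.mem_iff.1 hs
  have hmaps : Set.MapsTo (fun x => x - star x) (Set.range f) (f '' skewAdjoint T) := by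
    rintro _ ⟨x, rfl⟩
    exact ⟨x - star x, by simp [skewAdjoint.mem_iff], by simp [hstar]⟩
  simpa [hy, two_mul] using map_mem_closure (by fun_prop) (hf y) hmaps

theorem mem_closure_image_unitary_of_isUnit_one_add (hstar : ∀ x, f (star x) = star (f x))
    (hf : DenseRange f) (h2 : IsUnit (2 : R))
    (hinv : ∀ r : R, IsUnit r → ContinuousAt Ring.inverse r)
    (hskew : ∀ s ∈ skewAdjoint T, IsUnit (1 + s))
    {a : R} (ha : a ∈ unitary R) (hu : IsUnit (1 + a)) :
    a ∈ closure (f '' unitary T) := by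
  have hs : cayley a ∈ closure (f '' skewAdjoint T) :=
    skewAdjoint_subset_closure_image hstar hf h2 (cayley_mem_skewAdjoint ha hu)
  have hcont : ContinuousAt cayley (cayley a) :=
    continuousAt_cayley (hinv _ (isUnit_one_add_cayley h2 hu))
  rw [← cayley_cayley h2 hu]
  refine closure_mono ?_ (mem_closure_image hcont hs)
  rintro _ ⟨_, ⟨s, hs, rfl⟩, rfl⟩
  exact ⟨cayley s, cayley_mem_unitary hs (hskew s hs), map_cayley f (hskew s hs)⟩

theorem mem_closure_image_unitary_of_isUnit_add (hstar : ∀ x, f (star x) = star (f x))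
    (hf : DenseRange f) (h2 : IsUnit (2 : R))
    (hinv : ∀ r : R, IsUnit r → ContinuousAt Ring.inverse r)
    (hskew : ∀ s ∈ skewAdjoint T, IsUnit (1 + s))
    {a : R} (ha : a ∈ unitary R) {u : T} (hu : u ∈ unitary T) (hau : IsUnit (a + f u)) :
    a ∈ closure (f '' unitary T) := by
  have hfu : f u ∈ unitary R := map_mem_unitary hstar hu
  have hfua : star (f u) * a ∈ unitary R := mul_mem (Unitary.star_mem hfu) ha
  have hadd : 1 + star (f u) * a = star (f u) * (a + f u) := by
    rw [mul_add, Unitary.star_mul_self_of_mem hfu, add_comm]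
  have hunit : IsUnit (star (f u)) := (Unitary.toUnits ⟨f u, hfu⟩).isUnit.star
  have hmem := mem_closure_image_unitary_of_isUnit_one_add hstar hf h2 hinv hskew hfua
    (hadd ▸ hunit.mul hau)
  have hmaps : Set.MapsTo (f u * ·) (f '' unitary T) (f '' unitary T) := by
    rintro _ ⟨v, hv, rfl⟩
    exact ⟨u * v, mul_mem hu hv, map_mul f u v⟩
  simpa [← mul_assoc, Unitary.mul_star_self_of_mem hfu] using
    map_mem_closure (continuous_const_mul (f u)) hmem hmaps

end Density

section SignDiagonal

variable {ι κ : Type*} [DecidableEq ι] [DecidableEq κ] {R S : Type*} [Ring R] [Ring S]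

/-- The diagonal matrix over `R` with the signs `d i = ±1` on its diagonal. The signs are units of
`ℤ` so that they can be transported along ring homomorphisms. -/
def signDiagonal (R : Type*) [Ring R] (d : ι → ℤˣ) : Matrix ι ι R :=
  diagonal fun i => ((d i : ℤ) : R)

variable [Fintype ι] [Fintype κ]

theorem mapMatrix_signDiagonal (f : R →+* S) (d : ι → ℤˣ) :
    f.mapMatrix (signDiagonal R d) = signDiagonal S d := by
  simp [signDiagonal, diagonal_map]

theorem signDiagonal_mem_unitary [StarRing R] (d : ι → ℤˣ) :
    signDiagonal R d ∈ unitary (Matrix ι ι R) := by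
  have hd : ∀ i, ((d i : ℤ) : R) * ((d i : ℤ) : R) = 1 := fun i => by
    rw [← Int.cast_mul, Int.units_coe_mul_self, Int.cast_one]
  simp [Unitary.mem_iff, signDiagonal, star_eq_conjTranspose, diagonal_conjTranspose,
    Pi.star_def, hd]

theorem isUnit_fromBlocks_of_isUnit_schurComplement {A : Matrix ι ι R} {B : Matrix ι κ R}
    {C : Matrix κ ι R} {D : Matrix κ κ R} (hD : IsUnit D)
    (hS : IsUnit (A - B * Ring.inverse D * C)) : IsUnit (fromBlocks A B C D) := by
  set D' := Ring.inverse D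
  obtain ⟨S', hSS', hS'S⟩ := isUnit_iff_exists.1 hS
  have hDD' : D * D' = 1 := Ring.mul_inverse_cancel D hD
  have hD'D : D' * D = 1 := Ring.inverse_mul_cancel D hD
  have hUpper : IsUnit (fromBlocks 1 (B * D') 0 1 : Matrix (ι ⊕ κ) (ι ⊕ κ) R) :=
    isUnit_iff_exists.2 ⟨fromBlocks 1 (-(B * D')) 0 1, by simp [fromBlocks_multiply]⟩
  have hLower : IsUnit (fromBlocks 1 0 (D' * C) 1 : Matrix (ι ⊕ κ) (ι ⊕ κ) R) :=
    isUnit_iff_exists.2 ⟨fromBlocks 1 0 (-(D' * C)) 1, by simp [fromBlocks_multiply]⟩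
  have hDiag : IsUnit (fromBlocks (A - B * D' * C) 0 0 D) :=
    isUnit_iff_exists.2 ⟨fromBlocks S' 0 0 D', by
      simp [fromBlocks_multiply, hSS', hS'S, hDD', hD'D]⟩
  have hLDU : fromBlocks A B C D = fromBlocks 1 (B * D') 0 1 *
      fromBlocks (A - B * D' * C) 0 0 D * fromBlocks 1 0 (D' * C) 1 := by
    simp [fromBlocks_multiply, Matrix.mul_assoc, hD'D, ← Matrix.mul_assoc D, hDD']
  exact hLDU ▸ (hUpper.mul hDiag).mul hLower

theorem exists_isUnit_add_signDiagonal_sum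
    (hι : ∀ M : Matrix ι ι R, ∃ d, IsUnit (M + signDiagonal R d))
    (hκ : ∀ M : Matrix κ κ R, ∃ d, IsUnit (M + signDiagonal R d))
    (M : Matrix (ι ⊕ κ) (ι ⊕ κ) R) : ∃ d, IsUnit (M + signDiagonal R d) := by
  obtain ⟨d₂, hd₂⟩ := hκ M.toBlocks₂₂
  set N := Ring.inverse (M.toBlocks₂₂ + signDiagonal R d₂)
  obtain ⟨d₁, hd₁⟩ := hι (M.toBlocks₁₁ - M.toBlocks₁₂ * N * M.toBlocks₂₁)
  have hblocks : M + signDiagonal R (Sum.elim d₁ d₂) =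
      fromBlocks (M.toBlocks₁₁ + signDiagonal R d₁) M.toBlocks₁₂ M.toBlocks₂₁
        (M.toBlocks₂₂ + signDiagonal R d₂) := by
    have hdiag : signDiagonal R (Sum.elim d₁ d₂) =
        fromBlocks (signDiagonal R d₁) 0 0 (signDiagonal R d₂) := by
      rw [signDiagonal, signDiagonal, signDiagonal, fromBlocks_diagonal]
      congr 1
      ext (i | i) <;> rfl
    nth_rewrite 1 [hdiag, ← M.fromBlocks_toBlocks]
    simp [fromBlocks_add]
  exact ⟨_, hblocks ▸ isUnit_fromBlocks_of_isUnit_schurComplement hd₂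
    (by rwa [add_sub_right_comm])⟩

theorem exists_isUnit_add_signDiagonal_congr (e : ι ≃ κ)
    (hι : ∀ M : Matrix ι ι R, ∃ d, IsUnit (M + signDiagonal R d)) (M : Matrix κ κ R) :
    ∃ d, IsUnit (M + signDiagonal R d) := by
  obtain ⟨d, hd⟩ := hι (reindex e.symm e.symm M)
  refine ⟨d ∘ e.symm, ?_⟩
  convert hd.map (reindexRingEquiv R e) using 1
  ext i j
  simp [signDiagonal, diagonal_apply]

theorem exists_isUnit_add_signDiagonal_of_unique [Unique ι]
    (hR : ∀ x : R, ∃ d : ℤˣ, IsUnit (x + (d : ℤ))) (M : Matrix ι ι R) :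
    ∃ d, IsUnit (M + signDiagonal R d) := by
  obtain rfl : ‹Fintype ι› = Unique.fintype := Subsingleton.elim _ _
  obtain ⟨d, hd⟩ := hR (M default default)
  refine ⟨fun _ => d, ?_⟩
  convert hd.map (uniqueRingEquiv (m := ι)).symm using 1
  ext i j
  simp [signDiagonal, Subsingleton.elim i default, Subsingleton.elim j default]

theorem exists_isUnit_add_signDiagonal (hR : ∀ x : R, ∃ d : ℤˣ, IsUnit (x + (d : ℤ)))
    (M : Matrix ι ι R) : ∃ d, IsUnit (M + signDiagonal R d) := by
  have hFin : ∀ n, ∀ M : Matrix (Fin n) (Fin n) R, ∃ d, IsUnit (M + signDiagonal R d) := by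
    intro n
    induction n with
    | zero => exact fun M => ⟨1, isUnit_of_subsingleton _⟩
    | succ n ih =>
      exact exists_isUnit_add_signDiagonal_congr finSumFinEquiv
        (exists_isUnit_add_signDiagonal_sum ih (exists_isUnit_add_signDiagonal_of_unique hR))
  exact exists_isUnit_add_signDiagonal_congr (Fintype.equivFin ι).symm (hFin _) M

end SignDiagonal

section DivisionRing

variable {K : Type*} [DivisionRing K]

theorem exists_isUnit_add_intUnit (h2 : (2 : K) ≠ 0) (x : K) : ∃ d : ℤˣ, IsUnit (x + (d : ℤ)) := by
  by_cases hx : x + 1 = 0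
  · refine ⟨-1, isUnit_iff_ne_zero.2 fun hx' => h2 ?_⟩
    calc (2 : K) = (x + 1) - (x - 1) := by rw [← one_add_one_eq_two]; abel
      _ = 0 := by simp_all [sub_eq_add_neg]
  · exact ⟨1, isUnit_iff_ne_zero.2 (by simpa using hx)⟩

variable {ι : Type*} [Fintype ι] [DecidableEq ι]

theorem isUnit_of_forall_vecMul_eq_zero {M : Matrix ι ι K} (h : ∀ v, v ᵥ* M = 0 → v = 0) :
    IsUnit M := by
  have hinj : Function.Injective (toLinearMapRight' M) := (injective_iff_map_eq_zero _).2 h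
  obtain ⟨N, hN⟩ := vecMul_surjective_iff_exists_left_inverse.1
    (LinearMap.surjective_of_injective hinj)
  exact .of_mul_eq_one_right N hN

theorem isUnit_one_add_of_mem_skewAdjoint [StarRing K] (h2 : (2 : K) ≠ 0)
    (haniso : ∀ v : ι → K, v ⬝ᵥ star v = 0 → v = 0) {S : Matrix ι ι K}
    (hS : S ∈ skewAdjoint (Matrix ι ι K)) : IsUnit (1 + S) := by
  refine isUnit_of_forall_vecMul_eq_zero fun v hv => haniso v ?_
  have hvS : v ᵥ* S = -v := by
    rw [vecMul_add, vecMul_one] at hv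
    exact eq_neg_of_add_eq_zero_right hv
  have hSv : S *ᵥ star v = star v := by
    have hSH : Sᴴ = -S := skewAdjoint.mem_iff.1 hS
    simpa [star_vecMul, hSH, neg_mulVec] using congrArg star hvS
  have hneg : v ⬝ᵥ star v = -(v ⬝ᵥ star v) :=
    calc v ⬝ᵥ star v = v ⬝ᵥ S *ᵥ star v := by rw [hSv]
      _ = -(v ⬝ᵥ star v) := by rw [dotProduct_mulVec, hvS, neg_dotProduct]
  have htwo : 2 * (v ⬝ᵥ star v) = 0 := by rw [two_mul, ← eq_neg_iff_add_eq_zero, ← hneg]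
  exact (mul_eq_zero.1 htwo).resolve_left h2

end DivisionRing

section MatrixDensity

variable {ι : Type*} [Fintype ι] [DecidableEq ι]

theorem continuousAt_inverse_matrix {R : Type*} [NormedRing R] [CompleteSpace R]
    {M : Matrix ι ι R} (hM : IsUnit M) : ContinuousAt Ring.inverse M :=
  letI : NormedRing (Matrix ι ι R) := Matrix.linftyOpNormedRing
  haveI : @CompleteSpace (Matrix ι ι R) PseudoMetricSpace.toUniformSpace :=
    Matrix.instCompleteSpace _ _ _
  NormedRing.inverse_continuousAt hM.unit

theorem denseRange_mapMatrix {R S : Type*} [Ring R] [Ring S] [TopologicalSpace S] {f : R →+* S}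
    (hf : DenseRange f) : DenseRange (f.mapMatrix : Matrix ι ι R →+* Matrix ι ι S) :=
  .piMap fun _ => .piMap fun _ => hf

theorem mapMatrix_star {R S : Type*} [Ring R] [StarRing R] [Ring S] [StarRing S] {f : R →+* S}
    (hstar : ∀ x, f (star x) = star (f x)) (M : Matrix ι ι R) :
    f.mapMatrix (star M) = star (f.mapMatrix M) :=
  conjTranspose_map f hstar

variable {K L : Type*} [DivisionRing K] [StarRing K] [NormedDivisionRing L] [CompleteSpace L]
  [StarRing L] [ContinuousStar L] {f : K →+* L}

theorem unitary_subset_closure_image_mapMatrix (hstar : ∀ x, f (star x) = star (f x))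
    (hf : DenseRange f) (h2 : (2 : K) ≠ 0)
    (haniso : ∀ v : ι → K, v ⬝ᵥ star v = 0 → v = 0) :
    (unitary (Matrix ι ι L) : Set (Matrix ι ι L)) ⊆
      closure (f.mapMatrix '' unitary (Matrix ι ι K)) := by
  intro A hA
  have h2L : (2 : L) ≠ 0 := map_ofNat f 2 ▸ (map_ne_zero f).2 h2
  have h2Mat : IsUnit (2 : Matrix ι ι L) := by
    rw [← map_ofNat (scalar ι) 2]
    exact (isUnit_iff_ne_zero.2 h2L).map _
  obtain ⟨d, hd⟩ := exists_isUnit_add_signDiagonal (exists_isUnit_add_intUnit h2L) A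
  rw [← mapMatrix_signDiagonal f] at hd
  have hstarMat : ∀ M : Matrix ι ι K, f.mapMatrix (star M) = star (f.mapMatrix M) :=
    mapMatrix_star hstar
  have hskew : ∀ S ∈ skewAdjoint (Matrix ι ι K), IsUnit (1 + S) :=
    fun _ => isUnit_one_add_of_mem_skewAdjoint h2 haniso
  have hinv : ∀ M : Matrix ι ι L, IsUnit M → ContinuousAt Ring.inverse M :=
    fun _ hM => continuousAt_inverse_matrix hM
  exact mem_closure_image_unitary_of_isUnit_add hstarMat (denseRange_mapMatrix hf) h2Mat
    hinv hskew hA (signDiagonal_mem_unitary d) hd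

theorem sp_rational_quaternion_dense_general (hstar : ∀ x, f (star x) = star (f x))
    (hf : DenseRange f) (h2 : (2 : K) ≠ 0)
    (haniso : ∀ v : ι → K, v ⬝ᵥ star v = 0 → v = 0)
    {A : Matrix ι ι L} (hA : Aᴴ * A = 1) {ε : ℝ} (hε : 0 < ε) :
    ∃ B : Matrix ι ι L, Bᴴ * B = 1 ∧ (∀ i j, B i j ∈ Set.range f) ∧
      ∀ i j, ‖A i j - B i j‖ < ε := by
  have hAmem : A ∈ unitary (Matrix ι ι L) := ⟨hA, mul_eq_one_comm.1 hA⟩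
  have hnhds : ∀ᶠ Y in nhds A, ∀ i j, ‖A i j - Y i j‖ < ε := by
    simp only [Filter.eventually_all]
    intro i j
    have hcont : Continuous fun Y : Matrix ι ι L => ‖A i j - Y i j‖ := by fun_prop
    exact hcont.continuousAt.eventually_lt continuousAt_const (by simpa using hε)
  obtain ⟨_, hAB, B, hB, rfl⟩ := mem_closure_iff_nhds.1
    (unitary_subset_closure_image_mapMatrix hstar hf h2 haniso hAmem) _ hnhds
  exact ⟨f.mapMatrix B, (map_mem_unitary (mapMatrix_star hstar) hB).1,
    fun i j => Set.mem_range_self (B i j), hAB⟩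

end MatrixDensity

section Quaternion

/-- The ring homomorphism `ℍ[R] →+* ℍ[S]` that applies `f` to each of the four coordinates. -/
def quaternionMap {R S : Type*} [CommRing R] [CommRing S] (f : R →+* S) : ℍ[R] →+* ℍ[S] where
  toFun q := ⟨f q.re, f q.imI, f q.imJ, f q.imK⟩
  map_one' := by ext <;> simp
  map_zero' := by ext <;> simp
  map_mul' p q := by
    refine .trans ?_ (QuaternionAlgebra.mk_mul_mk ..).symm
    ext <;> simp [sub_eq_add_neg]
  map_add' p q := by
    refine .trans ?_ (QuaternionAlgebra.mk_add_mk ..).symm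
    ext <;> simp

section Coordinates

variable {R S : Type*} [CommRing R] [CommRing S] (f : R →+* S) (q : ℍ[R])

@[simp] theorem re_quaternionMap : (quaternionMap f q).re = f q.re := rfl

@[simp] theorem imI_quaternionMap : (quaternionMap f q).imI = f q.imI := rfl

@[simp] theorem imJ_quaternionMap : (quaternionMap f q).imJ = f q.imJ := rfl

@[simp] theorem imK_quaternionMap : (quaternionMap f q).imK = f q.imK := rfl

theorem quaternionMap_star : quaternionMap f (star q) = star (quaternionMap f q) := by
  ext <;> simp

end Coordinates

theorem denseRange_quaternionMap {R : Type*} [CommRing R] {f : R →+* ℝ} (hf : DenseRange f) :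
    DenseRange (quaternionMap f) := by
  let e : (Fin 4 → ℝ) ≃ₜ ℍ[ℝ] :=
    (PiLp.homeomorph 2 _).symm.trans
      Quaternion.linearIsometryEquivTuple.symm.toHomeomorph
  have hcoord : DenseRange (e ∘ Pi.map fun _ : Fin 4 => f) :=
    e.surjective.denseRange.comp (.piMap fun _ => hf) e.continuous
  refine hcoord.mono ?_
  rintro _ ⟨a, rfl⟩
  exact ⟨⟨a 0, a 1, a 2, a 3⟩, rfl⟩

theorem quaternion_eq_zero_of_dotProduct_star_self_eq_zero {ι F : Type*} [Fintype ι] [Field F]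
    [LinearOrder F] [IsStrictOrderedRing F] (v : ι → ℍ[F]) (hv : v ⬝ᵥ star v = 0) : v = 0 := by
  have hsum : ∑ i, Quaternion.normSq (v i) = 0 := by
    refine (algebraMap F ℍ[F]).injective ?_
    simpa [dotProduct, Quaternion.self_mul_star, map_sum] using! hv
  funext i
  exact Quaternion.normSq_eq_zero.1 ((Finset.sum_eq_zero_iff_of_nonneg fun _ _ =>
    Quaternion.normSq_nonneg).1 hsum i (Finset.mem_univ i))

end Quaternion

/-- For every `n ≥ 1`, the quaternionic unitary matrices with rational-quaternion entries
are dense in the compact symplectic group `Sp(n)`: given an `n × n` matrix `A` over the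
real quaternions with `Aᴴ * A = 1` and `ε > 0`, there is a quaternionic matrix `B` with
`Bᴴ * B = 1`, all four coordinates of every entry of `B` rational, and every entry of
`A - B` of norm less than `ε`. -/
theorem sp_rational_quaternion_dense (n : ℕ) (hn : 1 ≤ n)
    (A : Matrix (Fin n) (Fin n) (Quaternion ℝ)) (hA : Aᴴ * A = 1)
    (ε : ℝ) (hε : 0 < ε) :
    ∃ B : Matrix (Fin n) (Fin n) (Quaternion ℝ),
      Bᴴ * B = 1 ∧
      (∀ i j, (∃ q : ℚ, (B i j).re = (q : ℝ)) ∧ (∃ q : ℚ, (B i j).imI = (q : ℝ)) ∧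
        (∃ q : ℚ, (B i j).imJ = (q : ℝ)) ∧ ∃ q : ℚ, (B i j).imK = (q : ℝ)) ∧
      ∀ i j, ‖A i j - B i j‖ < ε := by
  have h2 : (2 : ℍ[ℚ]) ≠ 0 := fun h => two_ne_zero (congrArg QuaternionAlgebra.re h)
  obtain ⟨B, hB, hBrange, hAB⟩ := sp_rational_quaternion_dense_general
    (quaternionMap_star (Rat.castHom ℝ)) (denseRange_quaternionMap Rat.denseRange_cast) h2
    quaternion_eq_zero_of_dotProduct_star_self_eq_zero hA hε
  refine ⟨B, hB, fun i j => ?_, hAB⟩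
  obtain ⟨q, hq⟩ := hBrange i j
  rw [← hq]
  exact ⟨⟨q.re, rfl⟩, ⟨q.imI, rfl⟩, ⟨q.imJ, rfl⟩, ⟨q.imK, rfl⟩⟩
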